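/- Let Ω ⊂ ℝ^N (N ≥ 3) be a bounded open set with C² boundary and δ(x) := dist(x, ∂Ω). Then there exist constants c > 0 and β₀ > 0 such that for every β ∈ (0,β₀), every y ∈ ℝ^N and every r > 0: H^{N−1}(Σ_β ∩ B_r(y)) ≤ c r^{N−1}, where Σ_β := {x ∈ Ω : δ(x) = β}. -/

import Mathlib

open MeasureTheory Metric Set

/-- `Ω` has `C²` boundary: near each boundary point, `Ω` coincides with the strict
sublevel set of a `C²` function with nonvanishing derivative. -/
def HasC2Boundary {N : ℕ} (Ω : Set (EuclideanSpace ℝ (Fin N))) : Prop :=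
  ∀ p ∈ frontier Ω, ∃ (U : Set (EuclideanSpace ℝ (Fin N)))
    (f : EuclideanSpace ℝ (Fin N) → ℝ),
    IsOpen U ∧ p ∈ U ∧ ContDiffOn ℝ 2 f U ∧ (∀ x ∈ U, fderiv ℝ f x ≠ 0) ∧
    Ω ∩ U = {x ∈ U | f x < 0}

/-- The open ball about `x ∈ Ω` whose radius is the distance to the boundary stays in `Ω`. -/
theorem ball_infDist_frontier_subset {E : Type*} [NormedAddCommGroup E] [NormedSpace ℝ E]
    [FiniteDimensional ℝ E] {Ω : Set E} {x : E} (hx : x ∈ Ω) :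
    ball x (infDist x (frontier Ω)) ⊆ Ω := by
  intro z hz
  by_contra hzΩ
  have hne : Ω ≠ univ := by
    rintro rfl
    exact hzΩ (mem_univ z)
  obtain ⟨q, hq, hxq⟩ := exists_mem_frontier_infDist_compl_eq_dist hx hne
  have h₁ : infDist x Ωᶜ ≤ dist x z := infDist_le_dist_of_mem hzΩ
  have h₂ : infDist x (frontier Ω) ≤ dist x q := infDist_le_dist_of_mem hq
  rw [mem_ball, dist_comm] at hz
  linarith

/-- If two points of `Ω` are at the same distance `β` from the boundary, then translating a
nearest boundary point `q` of the first by their difference does not leave `closure Ω`. -/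
theorem add_sub_mem_closure_of_infDist_frontier_eq {E : Type*} [NormedAddCommGroup E]
    [NormedSpace ℝ E] [FiniteDimensional ℝ E] {Ω : Set E} {β : ℝ} (hβ : 0 < β) {x x' q : E}
    (hx' : x' ∈ Ω) (hx'β : infDist x' (frontier Ω) = β) (hxq : dist x q = β) :
    q + (x' - x) ∈ closure Ω := by
  have hball := closure_mono (ball_infDist_frontier_subset hx')
  rw [hx'β, closure_ball x' hβ.ne'] at hball
  apply hball
  rw [mem_closedBall, dist_eq_norm, ← hxq, dist_comm, dist_eq_norm]
  apply le_of_eq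
  congr 1
  abel

/-- Near a boundary point with a regular defining function `f`, the difference of two points of the
same level set of the distance to the boundary avoids a cone around the gradient of `f`. -/
theorem fderiv_sub_le_of_infDist_frontier_eq {E : Type*} [NormedAddCommGroup E]
    [NormedSpace ℝ E] [FiniteDimensional ℝ E] {Ω U : Set E} (hΩ : IsOpen Ω) (hU : IsOpen U)
    {f : E → ℝ} (hf : ContinuousOn f U) (hfΩ : Ω ∩ U = {x ∈ U | f x < 0})
    {a : E →L[ℝ] ℝ} {η : ℝ} {p : E} {ρ : ℝ} (hρU : ball p ρ ⊆ U)
    (ha : ∀ u ∈ ball p ρ, ∀ v ∈ ball p ρ, |f u - f v - a (u - v)| ≤ η * ‖u - v‖)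
    {β : ℝ} (hβ : 0 < β) {x x' q : E}
    (hx' : x' ∈ Ω) (hx'p : dist x' p + β < ρ)
    (hx'β : infDist x' (frontier Ω) = β) (hq : q ∈ frontier Ω) (hqp : q ∈ ball p ρ)
    (hxq : dist x q = β) :
    a (x' - x) ≤ η * ‖x' - x‖ := by
  set w := q + (x' - x) with hw
  have hwcl : w ∈ closure Ω := add_sub_mem_closure_of_infDist_frontier_eq hβ hx' hx'β hxq
  have hwx' : dist w x' = β := by
    rw [← hxq, dist_comm x, dist_eq_norm, dist_eq_norm]
    congr 1
    rw [hw]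
    abel
  have hwp : w ∈ ball p ρ := by
    rw [mem_ball]
    have := dist_triangle w x' p
    linarith
  have hfw : f w ≤ 0 := by
    have hwU := hρU hwp
    have hw₁ : w ∈ closure (Ω ∩ U) := by
      rw [inter_comm]
      exact hU.inter_closure ⟨hwU, hwcl⟩
    have hcont : ContinuousAt f w := hf.continuousAt (hU.mem_nhds hwU)
    have := hcont.continuousWithinAt.mem_closure (t := Iic 0) hw₁ (by
      intro z hz
      rw [hfΩ] at hz
      exact hz.2.le)
    simpa using this
  have hfq : 0 ≤ f q := by
    by_contra! h
    have : q ∈ Ω ∩ U := by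
      rw [hfΩ]
      exact ⟨hρU hqp, h⟩
    rw [hΩ.frontier_eq] at hq
    exact hq.2 this.1
  have key := ha w hwp q hqp
  have hwq : w - q = x' - x := by
    rw [hw]
    abel
  rw [hwq] at key
  have := (abs_le.1 key).1
  linarith

/-- A vector on which the functional `a` is small compared with its `i`-th coefficient is controlled
by its coordinates other than the `i`-th. -/
theorem norm_le_mul_norm_restrict_of_abs_le {N : ℕ} (a : EuclideanSpace ℝ (Fin N) →L[ℝ] ℝ)
    (i : Fin N) (hi : a (EuclideanSpace.single i 1) ≠ 0) (w : EuclideanSpace ℝ (Fin N))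
    (hw : |a w| ≤ |a (EuclideanSpace.single i 1)| / 2 * ‖w‖) :
    ‖w‖ ≤ 2 * (1 + ‖a‖ / |a (EuclideanSpace.single i 1)|) * N *
      ‖fun j : {j : Fin N // j ≠ i} => w j‖ := by
  set α := |a (EuclideanSpace.single i 1)| with hα
  have hα0 : 0 < α := abs_pos.2 hi
  set M := ‖fun j : {j : Fin N // j ≠ i} => w j‖
  set u := w - w i • EuclideanSpace.single i (1 : ℝ) with hu
  have hM0 : 0 ≤ M := norm_nonneg _
  have hui : ∀ j, |u j| ≤ M := by
    intro j
    by_cases hj : j = i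
    · subst hj
      simpa [hu] using hM0
    · have := norm_le_pi_norm (fun j : {j : Fin N // j ≠ i} => w j) ⟨j, hj⟩
      simpa [hu, hj] using this
  have huM : ‖u‖ ≤ N * M := by
    have hsum : u = ∑ j, u j • EuclideanSpace.single j (1 : ℝ) := by
      ext k
      simp [Finset.sum_apply, Pi.single_apply]
    calc ‖u‖ = ‖∑ j, u j • EuclideanSpace.single j (1 : ℝ)‖ := by rw [← hsum]
      _ ≤ ∑ j, ‖u j • EuclideanSpace.single j (1 : ℝ)‖ := norm_sum_le _ _
      _ ≤ ∑ _j : Fin N, M := Finset.sum_le_sum fun j _ => by simpa [norm_smul] using hui j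
      _ = N * M := by simp
  have hwu : w = u + w i • EuclideanSpace.single i (1 : ℝ) := by rw [hu]; abel
  have hnorm : ‖w‖ ≤ ‖u‖ + |w i| := by
    calc ‖w‖ = ‖u + w i • EuclideanSpace.single i (1 : ℝ)‖ := by rw [← hwu]
      _ ≤ ‖u‖ + ‖w i • EuclideanSpace.single i (1 : ℝ)‖ := norm_add_le _ _
      _ = ‖u‖ + |w i| := by simp [norm_smul]
  have hai : |w i| * α ≤ α / 2 * ‖w‖ + ‖a‖ * ‖u‖ := by
    have h₁ : w i * a (EuclideanSpace.single i 1) = a w - a u := by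
      rw [hu, map_sub, map_smul, smul_eq_mul]
      ring
    rw [hα, ← abs_mul, h₁]
    have h₂ : |a u| ≤ ‖a‖ * ‖u‖ := a.le_opNorm u
    have h₃ := abs_sub (a w) (a u)
    linarith
  have hwi : |w i| ≤ ‖w‖ / 2 + ‖a‖ / α * ‖u‖ := by
    rw [← mul_le_mul_iff_left₀ hα0]
    calc |w i| * α ≤ α / 2 * ‖w‖ + ‖a‖ * ‖u‖ := hai
      _ = (‖w‖ / 2 + ‖a‖ / α * ‖u‖) * α := by field_simp
  calc ‖w‖ ≤ 2 * (1 + ‖a‖ / α) * ‖u‖ := by linarith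
    _ ≤ 2 * (1 + ‖a‖ / α) * (N * M) := by gcongr
    _ = 2 * (1 + ‖a‖ / α) * N * M := by ring

/-- A set on which dropping one coordinate is bi-Lipschitz is upper Ahlfors regular of
codimension one. -/
theorem hausdorffMeasure_inter_ball_le_of_norm_le_restrict {N : ℕ} (i : Fin N) {K : ℝ}
    (hK : 0 ≤ K) {S : Set (EuclideanSpace ℝ (Fin N))}
    (hS : ∀ x ∈ S, ∀ x' ∈ S, ‖x' - x‖ ≤ K * ‖fun j : {j : Fin N // j ≠ i} => (x' - x) j‖)
    (y : EuclideanSpace ℝ (Fin N)) {r : ℝ} (hr : 0 < r) :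
    μH[(N : ℝ) - 1] (S ∩ ball y r) ≤ ENNReal.ofReal ((K * 2) ^ (N - 1) * r ^ (N - 1)) := by
  set π : EuclideanSpace ℝ (Fin N) → ({j : Fin N // j ≠ i} → ℝ) := fun x j => x j with hπ
  set T := S ∩ ball y r
  have hN : 1 ≤ N := Nat.one_le_of_lt i.pos
  have hcard : Fintype.card {j : Fin N // j ≠ i} = N - 1 := by simp
  have hd : (N : ℝ) - 1 = ((N - 1 : ℕ) : ℝ) := by simp [Nat.cast_sub hN]
  have hinj : InjOn π T := by
    intro x hx x' hx' h
    have h₁ := hS x hx.1 x' hx'.1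
    have h₂ : (fun j : {j : Fin N // j ≠ i} => (x' - x) j) = 0 := by
      ext j
      have := congrFun h j
      simp only [hπ] at this
      simp [this]
    rw [h₂, norm_zero, mul_zero] at h₁
    exact (sub_eq_zero.1 (norm_le_zero_iff.1 h₁)).symm
  obtain ⟨g, hg⟩ : ∃ g, LeftInvOn g π T := ⟨_, hinj.leftInvOn_invFunOn⟩
  have hlip : LipschitzOnWith K.toNNReal g (π '' T) := by
    apply LipschitzOnWith.of_dist_le_mul
    rintro _ ⟨x, hx, rfl⟩ _ ⟨x', hx', rfl⟩
    rw [hg hx, hg hx', dist_eq_norm, dist_eq_norm, Real.coe_toNNReal K hK]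
    exact hS x' hx'.1 x hx.1
  have himg : T = g '' (π '' T) := hg.image_image.symm
  have hball : π '' T ⊆ closedBall (π y) r := by
    rintro _ ⟨x, hx, rfl⟩
    rw [mem_closedBall, dist_pi_le_iff hr.le]
    intro j
    have h₁ : ‖(x - y) j‖ ≤ ‖x - y‖ := PiLp.norm_apply_le (x - y) (j : Fin N)
    have h₂ : dist x y < r := hx.2
    rw [dist_eq_norm] at h₂ ⊢
    exact h₁.trans h₂.le
  calc μH[(N : ℝ) - 1] T = μH[(N : ℝ) - 1] (g '' (π '' T)) := by rw [← himg]
    _ ≤ ENNReal.ofReal K ^ ((N : ℝ) - 1) * μH[(N : ℝ) - 1] (π '' T) :=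
        hlip.hausdorffMeasure_image_le (by rw [hd]; positivity)
    _ ≤ ENNReal.ofReal K ^ ((N : ℝ) - 1) *
          μH[(N : ℝ) - 1] (closedBall (π y) r) := by gcongr
    _ = ENNReal.ofReal ((K * 2) ^ (N - 1) * r ^ (N - 1)) := by
        rw [hd, ← hcard, hausdorffMeasure_pi_real, Real.volume_pi_closedBall _ hr.le, hcard,
          ENNReal.rpow_natCast, ← ENNReal.ofReal_pow hK,
          ← ENNReal.ofReal_mul (by positivity)]
        congr 1
        rw [← mul_pow, ← mul_pow]
        ring

/-- Points of the level sets of the distance to the boundary having a nearest boundary point close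
to a given one satisfy a codimension one upper Ahlfors bound. -/
theorem exists_nhds_hausdorffMeasure_infDist_frontier_le {N : ℕ}
    {Ω : Set (EuclideanSpace ℝ (Fin N))} (hΩo : IsOpen Ω) (hΩ2 : HasC2Boundary Ω)
    {p : EuclideanSpace ℝ (Fin N)} (hp : p ∈ frontier Ω) :
    ∃ t ∈ nhds p, ∃ c : ℝ, 0 < c ∧ ∃ β₀ : ℝ, 0 < β₀ ∧
      ∀ β ∈ Ioo (0 : ℝ) β₀, ∀ y : EuclideanSpace ℝ (Fin N), ∀ r : ℝ, 0 < r →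
        μH[(N : ℝ) - 1] ({x ∈ Ω | infDist x (frontier Ω) = β ∧
          ∃ q ∈ frontier Ω ∩ t, dist x q = β} ∩ ball y r) ≤
          ENNReal.ofReal (c * r ^ (N - 1)) := by
  obtain ⟨U, f, hU, hpU, hf, hf', hfΩ⟩ := hΩ2 p hp
  set a := fderiv ℝ f p
  obtain ⟨i, hi⟩ : ∃ i, a (EuclideanSpace.single i 1) ≠ 0 := by
    by_contra! h
    refine hf' p hpU (ContinuousLinearMap.coe_injective
      ((EuclideanSpace.basisFun (Fin N) ℝ).toBasis.ext fun i => ?_))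
    simpa using h i
  set η := |a (EuclideanSpace.single i 1)| / 2
  have hη0 : 0 < η := half_pos (abs_pos.2 hi)
  have hstrict : HasStrictFDerivAt f a p :=
    (hf.contDiffAt (hU.mem_nhds hpU)).hasStrictFDerivAt two_ne_zero
  obtain ⟨s, hs, happ⟩ := hstrict.approximates_deriv_on_nhds (c := ⟨η, hη0.le⟩) (Or.inr hη0)
  obtain ⟨ρ, hρ, hρs⟩ := Metric.mem_nhds_iff.1 (Filter.inter_mem hs (hU.mem_nhds hpU))
  have happ' : ∀ u ∈ ball p ρ, ∀ v ∈ ball p ρ, |f u - f v - a (u - v)| ≤ η * ‖u - v‖ :=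
    fun u hu v hv => happ u (hρs hu).1 v (hρs hv).1
  set K := 2 * (1 + ‖a‖ / |a (EuclideanSpace.single i 1)|) * N
  have hN : 0 < (N : ℝ) := Nat.cast_pos.2 i.pos
  have hK0 : 0 < K := by positivity
  refine ⟨ball p (ρ / 3), ball_mem_nhds p (by positivity), (K * 2) ^ (N - 1), by positivity,
    ρ / 3, by positivity, fun β hβ y r hr => ?_⟩
  apply hausdorffMeasure_inter_ball_le_of_norm_le_restrict i hK0.le _ y hr
  have hcone : ∀ x ∈ {x ∈ Ω | infDist x (frontier Ω) = β ∧
      ∃ q ∈ frontier Ω ∩ ball p (ρ / 3), dist x q = β}, ∀ x' ∈ {x ∈ Ω |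
      infDist x (frontier Ω) = β ∧ ∃ q ∈ frontier Ω ∩ ball p (ρ / 3), dist x q = β},
      a (x' - x) ≤ η * ‖x' - x‖ := by
    rintro x ⟨-, -, q, ⟨hq, hqp⟩, hxq⟩ x' ⟨hx', hx'β, q', ⟨-, hq'p⟩, hx'q'⟩
    refine fderiv_sub_le_of_infDist_frontier_eq hΩo hU hf.continuousOn hfΩ
      (hρs.trans inter_subset_right) happ' hβ.1 hx' ?_ hx'β hq
      (ball_subset_ball (by linarith) hqp) hxq
    have := dist_triangle x' q' p
    rw [mem_ball] at hq'p
    linarith [hβ.2]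
  intro x hx x' hx'
  refine norm_le_mul_norm_restrict_of_abs_le a i hi _ (abs_le.2 ⟨?_, hcone x hx x' hx'⟩)
  have := hcone x' hx' x hx
  rw [← neg_sub x' x, map_neg, norm_neg] at this
  exact neg_le.1 this

theorem stmt12 {N : ℕ} (hN : 3 ≤ N) (Ω : Set (EuclideanSpace ℝ (Fin N)))
    (hΩo : IsOpen Ω) (hΩb : Bornology.IsBounded Ω) (hΩ2 : HasC2Boundary Ω) :
    ∃ c : ℝ, 0 < c ∧ ∃ β₀ : ℝ, 0 < β₀ ∧
      ∀ β ∈ Set.Ioo (0:ℝ) β₀, ∀ y : EuclideanSpace ℝ (Fin N), ∀ r : ℝ, 0 < r →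
        μH[(N:ℝ) - 1] ({x ∈ Ω | Metric.infDist x (frontier Ω) = β} ∩ Metric.ball y r) ≤
          ENNReal.ofReal (c * r ^ (N - 1)) := by
  have hcompact : IsCompact (frontier Ω) :=
    Metric.isCompact_of_isClosed_isBounded isClosed_frontier
      (hΩb.closure.subset frontier_subset_closure)
  obtain ⟨c, hc, β₀, hβ₀, h⟩ := hcompact.induction_on
    (p := fun t => ∃ c : ℝ, 0 < c ∧ ∃ β₀ : ℝ, 0 < β₀ ∧
      ∀ β ∈ Ioo (0 : ℝ) β₀, ∀ y : EuclideanSpace ℝ (Fin N), ∀ r : ℝ, 0 < r →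
        μH[(N : ℝ) - 1] ({x ∈ Ω | infDist x (frontier Ω) = β ∧
          ∃ q ∈ frontier Ω ∩ t, dist x q = β} ∩ ball y r) ≤
          ENNReal.ofReal (c * r ^ (N - 1)))
    ⟨1, one_pos, 1, one_pos, by simp⟩
    (by
      rintro s t hst ⟨c, hc, β₀, hβ₀, h⟩
      refine ⟨c, hc, β₀, hβ₀, fun β hβ y r hr => (measure_mono ?_).trans (h β hβ y r hr)⟩
      rintro x ⟨⟨hx, hxβ, q, hq, hxq⟩, hxr⟩
      exact ⟨⟨hx, hxβ, q, ⟨hq.1, hst hq.2⟩, hxq⟩, hxr⟩)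
    (by
      rintro s t ⟨c, hc, β₀, hβ₀, h⟩ ⟨c', hc', β₀', hβ₀', h'⟩
      refine ⟨c + c', by positivity, min β₀ β₀', lt_min hβ₀ hβ₀', fun β hβ y r hr => ?_⟩
      have h₁ := h β ⟨hβ.1, hβ.2.trans_le (min_le_left _ _)⟩ y r hr
      have h₂ := h' β ⟨hβ.1, hβ.2.trans_le (min_le_right _ _)⟩ y r hr
      rw [add_mul, ENNReal.ofReal_add (by positivity) (by positivity)]
      refine (measure_mono ?_).trans ((measure_union_le _ _).trans (add_le_add h₁ h₂))
      rintro x ⟨⟨hx, hxβ, q, ⟨hq, hqs | hqt⟩, hxq⟩, hxr⟩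
      · exact Or.inl ⟨⟨hx, hxβ, q, ⟨hq, hqs⟩, hxq⟩, hxr⟩
      · exact Or.inr ⟨⟨hx, hxβ, q, ⟨hq, hqt⟩, hxq⟩, hxr⟩)
    (fun p hp => by
      obtain ⟨t, ht, h⟩ := exists_nhds_hausdorffMeasure_infDist_frontier_le hΩo hΩ2 hp
      exact ⟨t, mem_nhdsWithin_of_mem_nhds ht, h⟩)
  refine ⟨c, hc, β₀, hβ₀, fun β hβ y r hr => (measure_mono ?_).trans (h β hβ y r hr)⟩
  rintro x ⟨⟨hx, hxβ⟩, hxr⟩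
  have hne : (frontier Ω).Nonempty := by
    by_contra! hempty
    rw [hempty, infDist_empty] at hxβ
    exact hβ.1.ne hxβ
  obtain ⟨q, hq, hxq⟩ := hcompact.exists_infDist_eq_dist hne x
  exact ⟨⟨hx, hxβ, q, ⟨hq, hq⟩, hxq.symm.trans hxβ⟩, hxr⟩
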